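/- arXiv:1708.01607 — 2 statements merged into one kernel-verified Lean document; each statement's English description precedes it below -/
import Mathlib

section
/- For all k ≥ r ≥ 3, α(k, r) ≥ k(2r - 4); moreover α(k, r) ≤ (k-1)(4r - k - 6) when r ≤ k ≤ 2r-3, and α(k, r) ≤ (k-1)(2r - 3) when k ≥ 2r - 3. -/
open SimpleGraph

/-- `n` is the number of vertices of a `K_r`-free `k`-partite graph in which
the subgraph induced by any `k - i` parts contains a clique of size `r - 1`. -/
def BetaWitness (i k r n : ℕ) : Prop :=
  ∃ (G : SimpleGraph (Fin n)) (P : Fin n → Fin k),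
    (∀ u v, G.Adj u v → P u ≠ P v) ∧ G.CliqueFree r ∧
    ∀ S : Finset (Fin k), S.card = i →
      ∃ T : Finset (Fin n), G.IsNClique (r - 1) T ∧ ∀ v ∈ T, P v ∉ S

noncomputable def beta (i k r : ℕ) : ℕ := sInf {n | BetaWitness i k r n}

/-- A `k`-partite graph with partition map `P` is `K_r`-partite-saturated. -/
def PartiteSaturated {V : Type} (k r : ℕ) (G : SimpleGraph V) (P : V → Fin k) : Prop :=
  (∀ u v, G.Adj u v → P u ≠ P v) ∧ G.CliqueFree r ∧
  ∀ u v, P u ≠ P v → ¬ G.Adj u v →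
    ¬ (G ⊔ SimpleGraph.fromEdgeSet {s(u, v)}).CliqueFree r

/-- `m` is the number of edges between an independent transversal `X` and its complement
in a `K_r`-partite-saturated `k`-partite graph. -/
def AlphaWitness (k r m : ℕ) : Prop :=
  ∃ (n : ℕ) (G : SimpleGraph (Fin n)) (P : Fin n → Fin k) (x : Fin k → Fin n),
    PartiteSaturated k r G P ∧ (∀ i, P (x i) = i) ∧
    (∀ i j, ¬ G.Adj (x i) (x j)) ∧
    m = ∑ i : Fin k, (G.neighborSet (x i)).ncard

noncomputable def alpha (k r : ℕ) : ℕ := sInf {m | AlphaWitness k r m}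


/-- Hajnal's clique collection lemma, for cliques inside a set `N` of clique number at most `s`. -/
lemma hajnal_aux {V ι : Type} [DecidableEq V] [DecidableEq ι] (G : SimpleGraph V) (N : Set V) (s : ℕ)
    (hN : ∀ C : Finset V, G.IsClique (C : Set V) → (C : Set V) ⊆ N → C.card ≤ s)
    (f : ι → Finset V) (S : Finset ι) (hS : S.Nonempty)
    (hf : ∀ i ∈ S, G.IsNClique s (f i) ∧ (f i : Set V) ⊆ N) :
    ∃ I U : Finset V, (∀ v, v ∈ I ↔ ∀ i ∈ S, v ∈ f i) ∧ (∀ v, v ∈ U ↔ ∃ i ∈ S, v ∈ f i) ∧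
      2 * s ≤ I.card + U.card := by
  induction hS using Finset.Nonempty.cons_induction with
  | singleton a =>
    refine ⟨f a, f a, by simp, by simp, ?_⟩
    have := (hf a (by simp)).1.card_eq
    omega
  | cons a S ha hS ih =>
    obtain ⟨I, U, hI, hU, hc⟩ := ih (fun i hi => hf i (by simp [hi]))
    have hA := hf a (by simp)
    refine ⟨I ∩ f a, U ∪ f a, ?_, ?_, ?_⟩
    · intro v
      simp [hI, and_comm]
    · intro v
      simp [hU, or_comm]
    · have hIU : I ⊆ U := by
        intro v hv
        obtain ⟨i, hi⟩ := hS
        exact (hU v).2 ⟨i, hi, (hI v).1 hv i hi⟩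
      have h1 : ((f a ∩ U) ∪ I).card ≤ s := by
        apply hN
        · intro u hu v hv huv
          have key : ∀ u v, u ∈ U → v ∈ I → u ≠ v → G.Adj u v := by
            intro u v hu hv huv
            obtain ⟨i, hi, hui⟩ := (hU u).1 hu
            exact (hf i (by simp [hi])).1.isClique hui ((hI v).1 hv i hi) huv
          simp only [Finset.coe_union, Finset.coe_inter, Set.mem_union, Set.mem_inter_iff,
            Finset.mem_coe] at hu hv
          rcases hv with hv | hv
          · rcases hu with hu | hu
            · exact hA.1.isClique hu.1 hv.1 huv
            · exact (key v u hv.2 hu huv.symm).symm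
          · rcases hu with hu | hu
            · exact key u v hu.2 hv huv
            · exact key u v (hIU hu) hv huv
        · intro v hv
          have hvU : v ∈ U := by
            simp only [Finset.coe_union, Finset.coe_inter, Set.mem_union, Set.mem_inter_iff,
              Finset.mem_coe] at hv
            rcases hv with hv | hv
            · exact hv.2
            · exact hIU hv
          obtain ⟨i, hi, hvi⟩ := (hU v).1 hvU
          exact (hf i (by simp [hi])).2 hvi
      have h2 := Finset.card_union_add_card_inter (f a ∩ U) I
      have h3 : (f a ∩ U) ∩ I = I ∩ f a := by
        ext v
        simp only [Finset.mem_inter]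
        constructor
        · rintro ⟨⟨h, _⟩, h'⟩
          exact ⟨h', h⟩
        · rintro ⟨h, h'⟩
          exact ⟨⟨h', hIU h⟩, h⟩
      have h4 := Finset.card_union_add_card_inter U (f a)
      rw [Finset.inter_comm U (f a)] at h4
      rw [h3] at h2
      have := hA.1.card_eq
      omega

lemma lower_aux (k r m : ℕ) (hr : 3 ≤ r) (hkr : r ≤ k) (h : AlphaWitness k r m) :
    k * (2 * r - 4) ≤ m := by
  classical
  obtain ⟨n, G, P, x, ⟨hP, hfree, hsat⟩, hx, hind, rfl⟩ := h
  have main : ∀ i ∈ (Finset.univ : Finset (Fin k)), 2 * r - 4 ≤ (G.neighborSet (x i)).ncard := by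
    intro i _
    have hT : ∀ j : Fin k, j ≠ i → ∃ T : Finset (Fin n), G.IsNClique (r - 2) T ∧
        ∀ v ∈ T, G.Adj (x i) v ∧ G.Adj (x j) v := by
      intro j hj
      have hne : x i ≠ x j := fun h => hj (by rw [← hx j, ← hx i, h])
      have h1 := hsat (x i) (x j) (by rw [hx, hx]; exact hj.symm) (hind i j)
      change ¬ (G ⊔ SimpleGraph.edge (x i) (x j)).CliqueFree r at h1
      simp only [SimpleGraph.CliqueFree, not_forall, not_not] at h1
      obtain ⟨T, hT⟩ := h1
      have hadj : ∀ u v, (G ⊔ SimpleGraph.edge (x i) (x j)).Adj u v →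
          (¬ (u = x i ∧ v = x j)) → (¬ (u = x j ∧ v = x i)) → G.Adj u v := by
        intro u v h h1 h2
        simp only [SimpleGraph.sup_adj, SimpleGraph.edge_adj] at h
        tauto
      have hi : x i ∈ T := by
        by_contra hi
        refine hfree T ⟨?_, hT.card_eq⟩
        intro u hu v hv huv
        refine hadj u v (hT.isClique hu hv huv) ?_ ?_
        · rintro ⟨rfl, rfl⟩; exact hi hu
        · rintro ⟨rfl, rfl⟩; exact hi hv
      have hj : x j ∈ T := by
        by_contra hi
        refine hfree T ⟨?_, hT.card_eq⟩
        intro u hu v hv huv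
        refine hadj u v (hT.isClique hu hv huv) ?_ ?_
        · rintro ⟨rfl, rfl⟩; exact hi hv
        · rintro ⟨rfl, rfl⟩; exact hi hu
      refine ⟨(T.erase (x i)).erase (x j), ⟨?_, ?_⟩, ?_⟩
      · intro u hu v hv huv
        simp only [Finset.coe_erase, Set.mem_sdiff, Finset.mem_coe, Set.mem_singleton_iff] at hu hv
        refine hadj u v (hT.isClique hu.1.1 hv.1.1 huv) ?_ ?_
        · rintro ⟨rfl, rfl⟩; exact hv.2 rfl
        · rintro ⟨rfl, rfl⟩; exact hu.2 rfl
      · rw [Finset.card_erase_of_mem (by simp [hj, hne.symm]), Finset.card_erase_of_mem hi,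
          hT.card_eq]
        omega
      · intro v hv
        simp only [Finset.mem_erase] at hv
        obtain ⟨h1, h2, h3⟩ := hv
        exact ⟨hadj _ _ (hT.isClique hi h3 h2.symm) (by tauto) (by tauto),
          hadj _ _ (hT.isClique hj h3 h1.symm) (by tauto) (by tauto)⟩
    choose! f hf hf' using hT
    have hne : ((Finset.univ : Finset (Fin k)).erase i).Nonempty := by
      rw [← Finset.card_pos, Finset.card_erase_of_mem (by simp)]
      simp
      omega
    obtain ⟨I, U, hI, hU, hc⟩ := hajnal_aux G (G.neighborSet (x i)) (r - 2) (by
        intro C hC hCN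
        by_contra hlt
        have h1 : G.IsNClique (C.card + 1) (insert (x i) C) :=
          SimpleGraph.IsNClique.insert ⟨hC, rfl⟩ (fun b hb => hCN hb)
        exact (hfree.mono (by omega)) _ h1) f _ hne (by
        intro j hj
        have hj' : j ≠ i := by simpa using hj
        exact ⟨hf j hj', fun v hv => (hf' j hj' v hv).1⟩)
    have hI0 : I = ∅ := by
      rw [Finset.eq_empty_iff_forall_notMem]
      intro v hv
      rw [hI] at hv
      obtain ⟨j, hj⟩ := hne
      have h1 : P v ≠ i := by
        have := hP _ _ (hf' j (by simpa using hj) v (hv j hj)).1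
        rw [hx] at this
        exact this.symm
      have := hP _ _ (hf' (P v) h1 v (hv (P v) (by simpa using h1))).2
      rw [hx] at this
      exact this rfl
    have hUN : (U : Set (Fin n)) ⊆ G.neighborSet (x i) := by
      intro v hv
      obtain ⟨j, hj, hvj⟩ := (hU v).1 hv
      exact (hf' j (by simpa using hj) v hvj).1
    have := Set.ncard_le_ncard hUN (Set.toFinite _)
    rw [Set.ncard_coe_finset] at this
    rw [hI0] at hc
    simp at hc
    omega
  have := Finset.card_nsmul_le_sum _ _ _ main
  simpa using this

/-- `G` is a `K_{s+1}`-free graph with parts indexed by `ι` such that deleting two parts leaves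
a `K_s`. -/
def Wit (s : ℕ) (ι V : Type) : Prop :=
  ∃ (G : SimpleGraph V) (P : V → ι), (∀ u v, G.Adj u v → P u ≠ P v) ∧ G.CliqueFree (s + 1) ∧
    ∀ a b : ι, ∃ T : Finset V, G.IsNClique s T ∧ ∀ v ∈ T, P v ≠ a ∧ P v ≠ b

lemma wit_embed {s : ℕ} {ι κ V : Type} [Nonempty ι] (g : ι → κ) (hg : Function.Injective g)
    (h : Wit s ι V) : Wit s κ V := by
  obtain ⟨G, P, h1, h2, h3⟩ := h
  refine ⟨G, g ∘ P, fun u v h => hg.ne (h1 u v h), h2, fun a b => ?_⟩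
  obtain ⟨T, hT, hT'⟩ := h3 (Function.invFun g a) (Function.invFun g b)
  refine ⟨T, hT, fun v hv => ⟨?_, ?_⟩⟩
  · rintro rfl
    exact (hT' v hv).1 (Function.leftInverse_invFun hg _).symm
  · rintro rfl
    exact (hT' v hv).2 (Function.leftInverse_invFun hg _).symm

lemma wit_cycle (s : ℕ) (hs : 1 ≤ s) : Wit s (ZMod (2 * s + 1)) (ZMod (2 * s + 1)) := by
  classical
  have hlt : Fact (1 < 2 * s + 1) := ⟨by omega⟩
  let G : SimpleGraph (ZMod (2 * s + 1)) :=
    { Adj := fun i j => i ≠ j ∧ i + 1 ≠ j ∧ j + 1 ≠ i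
      symm := ⟨fun i j h => ⟨h.1.symm, h.2.2, h.2.1⟩⟩
      loopless := ⟨fun i h => h.1 rfl⟩ }
  refine ⟨G, id, fun u v h => h.1, ?_, ?_⟩
  · intro T hT
    have hd : Disjoint T (T.image (· + 1)) := by
      rw [Finset.disjoint_left]
      intro v hv hv'
      obtain ⟨w, hw, rfl⟩ := Finset.mem_image.1 hv'
      have hne : w ≠ w + 1 := by simp
      exact (hT.isClique hw hv hne).2.1 rfl
    have h1 := Finset.card_union_of_disjoint hd
    rw [Finset.card_image_of_injective _ (add_left_injective 1), hT.card_eq] at h1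
    have h2 := Finset.card_le_univ (T ∪ T.image (· + 1))
    rw [ZMod.card] at h2
    omega
  · have key : ∀ (a : ZMod (2 * s + 1)) (d : ℕ), d < 2 * s + 1 → (d = 0 ∨ d % 2 = 1) →
        ∃ T : Finset (ZMod (2 * s + 1)), G.IsNClique s T ∧ ∀ v ∈ T, v ≠ a ∧ v ≠ a + (d : ℕ) := by
      intro a d hd hodd
      have hinj : ∀ p q : ℕ, p < 2 * s + 1 → q < 2 * s + 1 →
          ((p : ZMod (2 * s + 1)) = q) → p = q := by
        intro p q hp hq h
        rw [ZMod.natCast_eq_natCast_iff'] at h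
        rwa [Nat.mod_eq_of_lt hp, Nat.mod_eq_of_lt hq] at h
      have hsucc : ∀ p q : ℕ, p < s → q < s →
          a + ((2 * p + 2 : ℕ) : ZMod (2 * s + 1)) + 1 ≠ a + ((2 * q + 2 : ℕ) : ZMod (2 * s + 1)) := by
        intro p q hp hq h
        rw [add_assoc] at h
        have h := add_left_cancel h
        rcases Nat.lt_or_ge (2 * p + 3) (2 * s + 1) with h1 | h1
        · have := hinj (2 * p + 3) (2 * q + 2) h1 (by omega) (by rw [← h]; push_cast; ring)
          omega
        · have hp' : 2 * p + 3 = 2 * s + 1 := by omega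
          have := hinj 0 (2 * q + 2) (by omega) (by omega) (by
            rw [← h, Nat.cast_zero, ← ZMod.natCast_self (2 * s + 1), ← hp']; push_cast; ring)
          omega
      refine ⟨(Finset.range s).image (fun j => a + ((2 * j + 2 : ℕ) : ZMod (2 * s + 1))),
        ⟨?_, ?_⟩, ?_⟩
      · intro u hu v hv huv
        simp only [Finset.coe_image, Set.mem_image, Finset.mem_coe, Finset.mem_range] at hu hv
        obtain ⟨p, hp, rfl⟩ := hu
        obtain ⟨q, hq, rfl⟩ := hv
        exact ⟨huv, hsucc p q hp hq, hsucc q p hq hp⟩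
      · rw [Finset.card_image_of_injOn, Finset.card_range]
        intro p hp q hq h
        simp only [Finset.coe_range, Set.mem_Iio] at hp hq
        have := hinj _ _ (by omega) (by omega) (add_left_cancel h)
        omega
      · intro v hv
        simp only [Finset.mem_image, Finset.mem_range] at hv
        obtain ⟨p, hp, rfl⟩ := hv
        constructor
        · intro h
          have := hinj (2 * p + 2) 0 (by omega) (by omega) (by
            rw [Nat.cast_zero]; exact add_eq_left.1 h)
          omega
        · intro h
          have := hinj _ _ (by omega) (by omega) (add_left_cancel h)
          omega
    intro a b
    have hb : b = a + (((b - a).val : ℕ) : ZMod (2 * s + 1)) := by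
      rw [ZMod.natCast_zmod_val]; ring
    have hlt := ZMod.val_lt (b - a)
    by_cases hd : (b - a).val = 0 ∨ (b - a).val % 2 = 1
    · obtain ⟨T, hT, hT'⟩ := key a _ hlt hd
      rw [← hb] at hT'
      exact ⟨T, hT, hT'⟩
    · obtain ⟨T, hT, hT'⟩ := key b (2 * s + 1 - (b - a).val) (by omega) (by omega)
      have ha : b + ((2 * s + 1 - (b - a).val : ℕ) : ZMod (2 * s + 1)) = a := by
        rw [Nat.cast_sub hlt.le, ZMod.natCast_self, ZMod.natCast_zmod_val]; ring
      rw [ha] at hT'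
      exact ⟨T, hT, fun v hv => (hT' v hv).symm⟩

lemma wit_step {s : ℕ} {ι V : Type} (p q : ι) (hpq : p ≠ q) (h : Wit s ι V) :
    Wit (s + 1) (Option ι) (V ⊕ Fin 3) := by
  classical
  obtain ⟨H, P, hP, hfree, hdel⟩ := h
  let c : Fin 3 → Option ι := ![none, some p, some q]
  let A : V ⊕ Fin 3 → V ⊕ Fin 3 → Prop := fun a b => match a, b with
    | .inl u, .inl v => H.Adj u v
    | .inl u, .inr i => some (P u) ≠ c i
    | .inr i, .inl u => some (P u) ≠ c i
    | .inr _, .inr _ => False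
  let G : SimpleGraph (V ⊕ Fin 3) :=
    { Adj := A
      symm := ⟨by rintro (u | i) (v | j) h <;> first | exact SimpleGraph.Adj.symm (G := H) h | exact h⟩
      loopless := ⟨by rintro (u | i) h <;> first | exact H.loopless.irrefl _ h | exact h⟩ }
  refine ⟨G, Sum.elim (some ∘ P) c, ?_, ?_, ?_⟩
  · rintro (u | i) (v | j) h
    · simpa using hP u v h
    · exact h
    · exact Ne.symm h
    · exact h.elim
  · intro T hT
    have h1 : T.toLeft.card ≤ s := by
      by_contra hlt
      refine hfree.mono (show s + 1 ≤ T.toLeft.card by omega) T.toLeft ⟨?_, rfl⟩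
      intro u hu v hv huv
      exact hT.isClique (x := Sum.inl u) (by simpa using hu) (y := Sum.inl v) (by simpa using hv)
        (by simpa using huv)
    have h2 : T.toRight.card ≤ 1 := by
      rw [Finset.card_le_one]
      intro i hi j hj
      by_contra hij
      exact hT.isClique (x := Sum.inr i) (by simpa using hi) (y := Sum.inr j) (by simpa using hj)
        (by simpa using hij)
    have h3 := T.card_toLeft_add_card_toRight
    have := hT.card_eq
    omega
  · intro a b
    obtain ⟨i, a', b', hia, hib, hab⟩ : ∃ (i : Fin 3) (a' b' : ι), c i ≠ a ∧ c i ≠ b ∧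
        ∀ z, z ≠ a' → z ≠ b' → some z ≠ a ∧ some z ≠ b ∧ some z ≠ c i := by
      have hc0 : c 0 = none := rfl
      have hc1 : c 1 = some p := rfl
      have hc2 : c 2 = some q := rfl
      rcases a with _ | a <;> rcases b with _ | b
      · exact ⟨1, p, p, by simp [hc1]⟩
      · by_cases hb : b = p
        · exact ⟨2, p, q, by simp +contextual [hc2, hb, hpq.symm]⟩
        · exact ⟨1, b, p, by simp +contextual [hc1, Ne.symm hb]⟩
      · by_cases hb : a = p
        · exact ⟨2, p, q, by simp +contextual [hc2, hb, hpq.symm]⟩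
        · exact ⟨1, a, p, by simp +contextual [hc1, Ne.symm hb]⟩
      · exact ⟨0, a, b, by simp +contextual [hc0]⟩
    obtain ⟨T, hT, hT'⟩ := hdel a' b'
    refine ⟨insert (Sum.inr i) (T.map Function.Embedding.inl), ?_, ?_⟩
    · refine SimpleGraph.IsNClique.insert ⟨?_, by simpa using hT.card_eq⟩ ?_
      · intro u hu v hv huv
        simp only [Finset.coe_map, Set.mem_image, Finset.mem_coe] at hu hv
        obtain ⟨u, hu, rfl⟩ := hu
        obtain ⟨v, hv, rfl⟩ := hv
        exact hT.isClique hu hv (fun h => huv (by rw [h]))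
      · intro u hu
        simp only [Finset.mem_map] at hu
        obtain ⟨u, hu, rfl⟩ := hu
        exact (hab _ (hT' u hu).1 (hT' u hu).2).2.2
    · intro v hv
      simp only [Finset.mem_insert, Finset.mem_map] at hv
      rcases hv with rfl | ⟨u, hu, rfl⟩
      · exact ⟨hia, hib⟩
      · have := hab _ (hT' u hu).1 (hT' u hu).2
        exact ⟨this.1, this.2.1⟩

lemma wit_exists (t : ℕ) (ht : 1 ≤ t) (m : ℕ) :
    ∃ (V : Type) (_ : Fintype V), Fintype.card V = 2 * t + 1 + 3 * m ∧
      Wit (t + m) (Fin (2 * t + 1 + m)) V := by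
  induction m with
  | zero =>
    refine ⟨ZMod (2 * t + 1), inferInstance, by simp [ZMod.card], ?_⟩
    exact wit_cycle t ht
  | succ m ih =>
    obtain ⟨V, hV, hc, hW⟩ := ih
    refine ⟨V ⊕ Fin 3, inferInstance, by simp [hc]; omega, ?_⟩
    have h := wit_step (⟨0, by omega⟩ : Fin (2 * t + 1 + m)) ⟨1, by omega⟩ (by simp) hW
    exact wit_embed (finSuccEquiv (2 * t + 1 + m)).symm (Equiv.injective _) h

lemma alpha_le_of_wit (k s : ℕ) (hk : s + 2 ≤ k) (V : Type) [Fintype V] (h : Wit s (Fin k) V) :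
    AlphaWitness k (s + 2) ((k - 1) * Fintype.card V) := by
  classical
  obtain ⟨H, Q, hQ, hfree, hdel⟩ := h
  let e : Fin (Fintype.card (Fin k ⊕ V)) ≃ Fin k ⊕ V := (Fintype.equivFin _).symm
  let A : Fin k ⊕ V → Fin k ⊕ V → Prop := fun a b => match a, b with
    | .inl _, .inl _ => False
    | .inl i, .inr u => i ≠ Q u
    | .inr u, .inl i => i ≠ Q u
    | .inr u, .inr v => H.Adj u v
  let B : SimpleGraph (Fin k ⊕ V) :=
    { Adj := A
      symm := ⟨by rintro (u | i) (v | j) h <;> first | exact SimpleGraph.Adj.symm (G := H) h | exact h⟩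
      loopless := ⟨by rintro (u | i) h <;> first | exact H.loopless.irrefl _ h | exact h⟩ }
  let R : Fin k ⊕ V → Fin k := Sum.elim id Q
  have hBR : ∀ u v, B.Adj u v → R u ≠ R v := by
    rintro (u | i) (v | j) h
    · exact h.elim
    · exact h
    · exact Ne.symm h
    · exact hQ _ _ h
  have hBfree : B.CliqueFree (s + 2) := by
    intro T hT
    have h1 : T.toRight.card ≤ s := by
      by_contra hlt
      refine hfree.mono (show s + 1 ≤ T.toRight.card by omega) T.toRight ⟨?_, rfl⟩
      intro u hu v hv huv
      exact hT.isClique (x := Sum.inr u) (by simpa using hu) (y := Sum.inr v) (by simpa using hv)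
        (by simpa using huv)
    have h2 : T.toLeft.card ≤ 1 := by
      rw [Finset.card_le_one]
      intro i hi j hj
      by_contra hij
      exact hT.isClique (x := Sum.inl i) (by simpa using hi) (y := Sum.inl j) (by simpa using hj)
        (by simpa using hij)
    have h3 := T.card_toLeft_add_card_toRight
    have := hT.card_eq
    omega
  let G₀ : SimpleGraph (Fin (Fintype.card (Fin k ⊕ V))) := B.comap e
  let P : Fin (Fintype.card (Fin k ⊕ V)) → Fin k := fun a => R (e a)
  let x : Fin k → Fin (Fintype.card (Fin k ⊕ V)) := fun i => e.symm (Sum.inl i)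
  have hx : ∀ i, P (x i) = i := fun i => by simp [P, x, R]
  have hG₀free : G₀.CliqueFree (s + 2) :=
    SimpleGraph.CliqueFree.comap ⟨(SimpleGraph.Embedding.comap e.toEmbedding B).toCopy⟩ hBfree
  obtain ⟨G, hle, hG⟩ := (Set.toFinite {G : SimpleGraph (Fin (Fintype.card (Fin k ⊕ V))) |
    (∀ u v, G.Adj u v → P u ≠ P v) ∧ G.CliqueFree (s + 2)}).exists_le_maximal
    (a := G₀) ⟨fun u v h => hBR _ _ h, hG₀free⟩
  have hnot : ∀ i j, ¬ G.Adj (x i) (x j) := by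
    intro i j hadj
    obtain ⟨T, hT, hT'⟩ := hdel i j
    let T' := T.map (Function.Embedding.inr.trans e.symm.toEmbedding)
    have hT1 : G.IsNClique s T' := by
      refine ⟨?_, by simpa [T'] using hT.card_eq⟩
      intro u hu v hv huv
      simp only [T', Finset.coe_map, Set.mem_image, Finset.mem_coe] at hu hv
      obtain ⟨u, hu, rfl⟩ := hu
      obtain ⟨v, hv, rfl⟩ := hv
      apply hle
      have := hT.isClique hu hv (fun h => huv (by rw [h]))
      simpa [G₀, B, A] using this
    have hadj' : ∀ l v, v ∈ T → Q v ≠ l → G.Adj (x l) (e.symm (Sum.inr v)) := by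
      intro l v hv h
      apply hle
      simpa [G₀, B, A, x] using h.symm
    have hT2 := hT1.insert (a := x j) (by
      intro b hb
      obtain ⟨v, hv, rfl⟩ := Finset.mem_map.1 hb
      exact hadj' j v hv (hT' v hv).2)
    have hT3 := hT2.insert (a := x i) (by
      intro b hb
      rcases Finset.mem_insert.1 hb with rfl | hb
      · exact hadj
      obtain ⟨v, hv, rfl⟩ := Finset.mem_map.1 hb
      exact hadj' i v hv (hT' v hv).1)
    exact hG.prop.2 _ hT3
  refine ⟨_, G, P, x, ⟨hG.prop.1, hG.prop.2, ?_⟩, hx, hnot, ?_⟩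
  · intro u v huv hadj hcf
    have hmem : (∀ a b, (G ⊔ SimpleGraph.fromEdgeSet {s(u, v)}).Adj a b → P a ≠ P b) ∧
        (G ⊔ SimpleGraph.fromEdgeSet {s(u, v)}).CliqueFree (s + 2) := by
      refine ⟨?_, hcf⟩
      intro a b hab
      change (G ⊔ SimpleGraph.edge u v).Adj a b at hab
      simp only [SimpleGraph.sup_adj, SimpleGraph.edge_adj] at hab
      rcases hab with hab | ⟨⟨rfl, rfl⟩ | ⟨rfl, rfl⟩, _⟩
      · exact hG.prop.1 a b hab
      · exact huv
      · exact huv.symm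
    have := hG.le_of_ge hmem le_sup_left
    apply hadj
    apply this
    change (G ⊔ SimpleGraph.edge u v).Adj u v
    simp only [SimpleGraph.sup_adj, SimpleGraph.edge_adj]
    exact Or.inr ⟨by simp, fun h => huv (by rw [h])⟩
  · have hnb : ∀ i, G.neighborSet (x i) =
        ((Finset.univ.filter (fun v => i ≠ Q v)).map
          (Function.Embedding.inr.trans e.symm.toEmbedding) : Finset _) := by
      intro i
      ext w
      obtain ⟨w, rfl⟩ := e.symm.surjective w
      rcases w with j | v
      · simp only [SimpleGraph.mem_neighborSet, Finset.mem_coe, Finset.mem_map]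
        constructor
        · intro h
          exact (hnot i j h).elim
        · rintro ⟨v, _, hv⟩
          have := e.symm.injective hv
          simp at this
      · simp only [SimpleGraph.mem_neighborSet, Finset.mem_coe, Finset.mem_map]
        constructor
        · intro h
          refine ⟨v, ?_, rfl⟩
          have := hG.prop.1 _ _ h
          rw [hx] at this
          simpa [P, R] using this
        · rintro ⟨v', hv', h⟩
          have h := e.symm.injective h
          simp at h
          subst h
          apply hle
          simpa [G₀, B, A, x] using hv'
    simp only [hnb, Set.ncard_coe_finset, Finset.card_map, Finset.card_filter]
    rw [Finset.sum_comm]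
    have : ∀ v : V, ∑ i : Fin k, (if i ≠ Q v then 1 else 0) = k - 1 := by
      intro v
      rw [← Finset.card_filter, Finset.filter_ne', Finset.card_erase_of_mem (by simp)]
      simp
    simp only [this]
    simp [mul_comm]

theorem stmt_12 (k r : ℕ) (hr : 3 ≤ r) (hkr : r ≤ k) :
    k * (2 * r - 4) ≤ alpha k r ∧
    (k ≤ 2 * r - 3 → alpha k r ≤ (k - 1) * (4 * r - k - 6)) ∧
    (2 * r - 3 ≤ k → alpha k r ≤ (k - 1) * (2 * r - 3)) := by
  have h1 : k ≤ 2 * r - 3 → AlphaWitness k r ((k - 1) * (4 * r - k - 6)) := by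
    intro hk
    obtain ⟨V, hV, hc, hW⟩ := wit_exists (k + 1 - r) (by omega) (2 * r - 3 - k)
    have e1 : k + 1 - r + (2 * r - 3 - k) = r - 2 := by omega
    have e2 : 2 * (k + 1 - r) + 1 + (2 * r - 3 - k) = k := by omega
    have e3 : 4 * r - k - 6 = Fintype.card V := by omega
    have e4 : r = r - 2 + 2 := by omega
    rw [e1, e2] at hW
    have := alpha_le_of_wit k (r - 2) (by omega) V hW
    rwa [← e4, ← e3] at this
  have h2 : 2 * r - 3 ≤ k → AlphaWitness k r ((k - 1) * (2 * r - 3)) := by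
    intro hk
    obtain ⟨V, hV, hc, hW⟩ := wit_exists (r - 2) (by omega) 0
    have e3 : 2 * r - 3 = Fintype.card V := by omega
    have e4 : r = r - 2 + 2 := by omega
    have hW' : Wit (r - 2) (Fin k) V :=
      wit_embed (Fin.castLE (by omega)) (Fin.castLE_injective _) hW
    have := alpha_le_of_wit k (r - 2) (by omega) V hW'
    rwa [← e4, ← e3] at this
  refine ⟨?_, fun hk => Nat.sInf_le (h1 hk), fun hk => Nat.sInf_le (h2 hk)⟩
  have hne : {m | AlphaWitness k r m}.Nonempty := by
    rcases le_total k (2 * r - 3) with hk | hk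
    · exact ⟨_, h1 hk⟩
    · exact ⟨_, h2 hk⟩
  exact lower_aux k r _ hr hkr (Nat.sInf_mem hne)
end

section
/- For every r ≥ 4, α(r, r) ≥ r(2r - 4) + 1. That is, there is no K_r-partite-saturated r-partite graph containing an independent transversal X (one vertex per part) with exactly r(2r-4) edges between X and its complement. -/
open SimpleGraph

/-- The structure of an extremal neighbourhood: the cliques `y q` behave like orientations of a
tree on `S` towards `q`. -/
structure TreeLike {ι V : Type} (G : SimpleGraph V) (P : V → ι) (S : Finset ι) (H : Finset V)
    (y : ι → ι → V) : Prop where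
  p0 : ∀ z ∈ H, ∃ q ∈ S, P z ∈ S ∧ q ≠ P z ∧ z = y q (P z)
  p2 : ∀ q ∈ S, ∀ a ∈ S, ∀ b ∈ S, q ≠ a → q ≠ b → a ≠ b → y q a = y b a ∨ y q b = y a b
  p3 : ∀ a ∈ S, ∀ b ∈ S, a ≠ b → ∃ c ∈ S, c ≠ b ∧ y c b = y a b ∧ ¬ G.Adj (y b c) (y c b)
  p4 : ∃ b ∈ S, ∃ b' ∈ S, b ≠ b' ∧ (∀ q ∈ S, ∀ q' ∈ S, q ≠ b → q' ≠ b → y q b = y q' b) ∧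
    (∀ q ∈ S, ∀ q' ∈ S, q ≠ b' → q' ≠ b' → y q b' = y q' b')
  p5 : ∀ q ∈ S, ∀ f : ι → V, (∀ a ∈ S, a ≠ q → f a ∈ H ∧ P (f a) = a) →
    (∀ a ∈ S, ∀ b ∈ S, a ≠ q → b ≠ q → a ≠ b → G.Adj (f a) (f b)) → ∀ a ∈ S, a ≠ q → f a = y q a

theorem tree_struct {ι V : Type} [DecidableEq ι] [DecidableEq V] (G : SimpleGraph V) (P : V → ι) :
    ∀ (n : ℕ) (S : Finset ι) (H : Finset V) (y : ι → ι → V), S.card = n + 2 →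
    (∀ q ∈ S, ∀ a ∈ S, q ≠ a → y q a ∈ H ∧ P (y q a) = a) →
    (∀ q ∈ S, ∀ a ∈ S, ∀ b ∈ S, q ≠ a → q ≠ b → a ≠ b → G.Adj (y q a) (y q b)) →
    (¬ ∃ f : ι → V, ∀ a ∈ S, (f a ∈ H ∧ P (f a) = a) ∧ ∀ b ∈ S, a ≠ b → G.Adj (f a) (f b)) →
    2 * (n + 1) ≤ H.card ∧ (H.card = 2 * (n + 1) → TreeLike G P S H y) := by
  intro n
  induction n with
  | zero =>
    intro S H y hS h1 h2 h3
    obtain ⟨a, b, hab, rfl⟩ := Finset.card_eq_two.1 hS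
    have ha := h1 a (by simp) b (by simp) hab
    have hb := h1 b (by simp) a (by simp) hab.symm
    have hne : y a b ≠ y b a := fun h => hab (by rw [← hb.2, ← h, ha.2])
    have hsub : ({y a b, y b a} : Finset V) ⊆ H := by
      intro z hz
      simp only [Finset.mem_insert, Finset.mem_singleton] at hz
      rcases hz with rfl | rfl
      exacts [ha.1, hb.1]
    have hc : ({y a b, y b a} : Finset V).card = 2 := Finset.card_pair hne
    have hnadj : ¬ G.Adj (y a b) (y b a) := by
      intro h
      refine h3 ⟨fun c => if c = a then y b a else y a b, ?_⟩
      have := hab.symm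
      have := h.symm
      intro c hc
      simp only [Finset.mem_insert, Finset.mem_singleton] at hc
      rcases hc with rfl | rfl <;> simp [*]
    refine ⟨by have := Finset.card_le_card hsub; omega, fun hH => ?_⟩
    have hHe : ({y a b, y b a} : Finset V) = H := Finset.eq_of_subset_of_card_le hsub (by omega)
    have hnadj' : ¬ G.Adj (y b a) (y a b) := fun h => hnadj h.symm
    refine ⟨?_, ?_, ?_, ?_, ?_⟩
    · intro z hz
      rw [← hHe] at hz
      simp only [Finset.mem_insert, Finset.mem_singleton] at hz
      rcases hz with rfl | rfl
      · exact ⟨a, by simp, by simp [ha.2], by rw [ha.2]; exact hab, by rw [ha.2]⟩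
      · exact ⟨b, by simp, by simp [hb.2], by rw [hb.2]; exact hab.symm, by rw [hb.2]⟩
    · intro q hq c hc d hd
      simp only [Finset.mem_insert, Finset.mem_singleton] at hq hc hd
      grind
    · intro c hc d hd hcd
      refine ⟨c, hc, hcd, rfl, ?_⟩
      simp only [Finset.mem_insert, Finset.mem_singleton] at hc hd
      grind
    · refine ⟨a, by simp, b, by simp, hab, ?_, ?_⟩ <;>
      · intro q hq q' hq'
        simp only [Finset.mem_insert, Finset.mem_singleton] at hq hq'
        grind
    · intro q hq f hf _ c hc hcq
      have := hf c hc hcq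
      rw [← hHe] at this
      simp only [Finset.mem_insert, Finset.mem_singleton] at hq hc this
      grind
  | succ n ih =>
    intro S H y hS h1 h2 h3
    by_cases hall : ∀ p ∈ S, 2 ≤ (H.filter (fun z => P z = p)).card
    · have h4 : ∑ p ∈ S, 2 ≤ ∑ p ∈ S, (H.filter (fun z => P z = p)).card := Finset.sum_le_sum hall
      have h5 : ∑ p ∈ S, (H.filter (fun z => P z = p)).card ≤ H.card := by
        rw [← Finset.card_biUnion]
        · apply Finset.card_le_card
          intro z; simp
        · intro p _ q _ hpq
          rw [Function.onFun, Finset.disjoint_left]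
          intro z; simp only [Finset.mem_filter]
          rintro ⟨_, rfl⟩ ⟨_, h⟩
          exact hpq h
      simp only [Finset.sum_const, smul_eq_mul, hS] at h4
      exact ⟨by omega, fun h => by omega⟩
    push Not at hall
    obtain ⟨p, hp, hcard⟩ := hall
    have hsing : ∀ z ∈ H, ∀ z' ∈ H, P z = p → P z' = p → z = z' := by
      have := Finset.card_le_one.1 (Nat.lt_succ_iff.1 hcard)
      intro z hz z' hz' h h'
      exact this z (by simp [hz, h]) z' (by simp [hz', h'])
    set S' := S.erase p with hS'
    have hS'c : S'.card = n + 2 := by rw [hS', Finset.card_erase_of_mem hp, hS]; rfl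
    have hmS : ∀ q, q ∈ S' ↔ q ≠ p ∧ q ∈ S := by intro q; simp [hS']
    obtain ⟨q0, hq0⟩ : S'.Nonempty := Finset.card_pos.1 (by omega)
    rw [hmS] at hq0
    set u := y q0 p with hu
    have huH := h1 q0 hq0.2 p hp hq0.1
    have hyu : ∀ q ∈ S, q ≠ p → y q p = u := fun q hq hqp =>
      hsing _ (h1 q hq p hp hqp).1 _ huH.1 (h1 q hq p hp hqp).2 huH.2
    classical
    set H' := H.filter (fun z => G.Adj u z) with hH'
    have hmH : ∀ z, z ∈ H' ↔ z ∈ H ∧ G.Adj u z := by intro z; simp [hH']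
    have hex : ∀ f : ι → V, (∀ a ∈ S, a ≠ p → f a ∈ H ∧ P (f a) = a) →
        (∀ a ∈ S, ∀ b ∈ S, a ≠ p → b ≠ p → a ≠ b → G.Adj (f a) (f b)) →
        ∃ l ∈ S, l ≠ p ∧ ¬ G.Adj u (f l) := by
      intro f hf1 hf2
      by_contra hcon
      push Not at hcon
      apply h3
      refine ⟨fun a => if a = p then u else f a, ?_⟩
      intro a ha
      by_cases hap : a = p
      · subst hap
        refine ⟨by simpa using huH, ?_⟩
        intro b hb hab
        simp [hab.symm, hcon b hb hab.symm]
      · refine ⟨by simpa [hap] using hf1 a ha hap, ?_⟩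
        intro b hb hab
        by_cases hbp : b = p
        · simp [hap, hbp, (hcon a ha hap).symm]
        · simpa [hap, hbp] using hf2 a ha b hb hap hbp hab
    obtain ⟨l, hl, hlp, hlu⟩ := hex (y p) (fun a ha hap => h1 p hp a ha (Ne.symm hap))
      (fun a ha b hb hap hbp hab => h2 p hp a ha b hb (Ne.symm hap) (Ne.symm hbp) hab)
    set w := y p l with hw
    have hwH := h1 p hp l hl (Ne.symm hlp)
    have hwu : w ≠ u := fun h => hlp (hwH.2.symm.trans ((congrArg P h).trans huH.2))
    have huH' : u ∉ H' := by simp [hmH]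
    have hwH' : w ∉ H' := by simp [hmH, hlu]
    have hsub : insert u (insert w H') ⊆ H := by
      intro z hz
      simp only [Finset.mem_insert, hmH] at hz
      rcases hz with rfl | rfl | hz
      exacts [huH.1, hwH.1, hz.1]
    have hc2 : (insert u (insert w H')).card = H'.card + 2 := by
      rw [Finset.card_insert_of_notMem, Finset.card_insert_of_notMem hwH']
      simp [huH', hwu.symm]
    have hc3 := Finset.card_le_card hsub
    obtain ⟨i1, i2⟩ := ih S' H' y hS'c
      (by
        intro q hq a ha hqa
        rw [hmS] at hq ha
        refine ⟨(hmH _).2 ⟨(h1 q hq.2 a ha.2 hqa).1, ?_⟩, (h1 q hq.2 a ha.2 hqa).2⟩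
        rw [← hyu q hq.2 hq.1]
        exact h2 q hq.2 p hp a ha.2 hq.1 hqa (Ne.symm ha.1))
      (by
        intro q hq a ha b hb
        rw [hmS] at hq ha hb
        exact h2 q hq.2 a ha.2 b hb.2)
      (by
        rintro ⟨f, hf⟩
        obtain ⟨m, hm, hmp, hmu⟩ := hex f
          (fun a ha hap => ⟨((hmH _).1 (hf a ((hmS a).2 ⟨hap, ha⟩)).1.1).1,
            (hf a ((hmS a).2 ⟨hap, ha⟩)).1.2⟩)
          (fun a ha b hb hap hbp hab => (hf a ((hmS a).2 ⟨hap, ha⟩)).2 b ((hmS b).2 ⟨hbp, hb⟩) hab)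
        exact hmu ((hmH _).1 (hf m ((hmS m).2 ⟨hmp, hm⟩)).1.1).2)
    refine ⟨by omega, fun hHc => ?_⟩
    obtain ⟨p0, p2, p3, p4, p5⟩ := i2 (by omega)
    have hHe : insert u (insert w H') = H := Finset.eq_of_subset_of_card_le hsub (by omega)
    have hHcase : ∀ z ∈ H, z = u ∨ z = w ∨ z ∈ H' := by
      intro z hz; rw [← hHe] at hz; simpa using hz
    have hlS' : l ∈ S' := (hmS l).2 ⟨hlp, hl⟩
    have hkey : ∀ f : ι → V, (∀ a ∈ S, a ≠ p → f a ∈ H ∧ P (f a) = a) →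
        (∀ a ∈ S, ∀ b ∈ S, a ≠ p → b ≠ p → a ≠ b → G.Adj (f a) (f b)) →
        f l = w ∧ ∀ a ∈ S, a ≠ p → a ≠ l → f a = y l a := by
      intro f hf1 hf2
      have hfH : ∀ a ∈ S, a ≠ p → a ≠ l → f a ∈ H' := by
        intro a ha hap hal
        rcases hHcase _ (hf1 a ha hap).1 with h | h | h
        · exact absurd (by rw [← (hf1 a ha hap).2, h, huH.2]) hap
        · exact absurd (by rw [← (hf1 a ha hap).2, h, hwH.2]) hal
        · exact h
      constructor
      · obtain ⟨m, hm, hmp, hmu⟩ := hex f hf1 hf2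
        rcases eq_or_ne m l with rfl | hml
        · rcases hHcase _ (hf1 m hm hmp).1 with h | h | h
          · exact absurd (by rw [← (hf1 m hm hmp).2, h, huH.2]) hmp
          · exact h
          · exact absurd ((hmH _).1 h).2 hmu
        · exact absurd ((hmH _).1 (hfH m hm hmp hml)).2 hmu
      · intro a ha hap hal
        refine p5 l hlS' f ?_ ?_ a ((hmS a).2 ⟨hap, ha⟩) hal
        · intro b hb hbl
          rw [hmS] at hb
          exact ⟨hfH b hb.2 hb.1 hbl, (hf1 b hb.2 hb.1).2⟩
        · intro b hb c hc _ _ hbc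
          rw [hmS] at hb hc
          exact hf2 b hb.2 c hc.2 hb.1 hc.1 hbc
    have hyp : ∀ a ∈ S, a ≠ p → a ≠ l → y p a = y l a :=
      (hkey (y p) (fun a ha hap => h1 p hp a ha (Ne.symm hap))
      (fun a ha b hb hap hbp hab => h2 p hp a ha b hb (Ne.symm hap) (Ne.symm hbp) hab)).2
    refine ⟨?_, ?_, ?_, ?_, ?_⟩
    · intro z hz
      rcases hHcase z hz with rfl | rfl | hz
      · exact ⟨q0, hq0.2, by rw [huH.2]; exact ⟨hp, hq0.1, hu⟩⟩
      · exact ⟨p, hp, by rw [hwH.2]; exact ⟨hl, Ne.symm hlp, hw⟩⟩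
      · obtain ⟨q, hq, hzS, hqz, h⟩ := p0 z hz
        exact ⟨q, ((hmS q).1 hq).2, ((hmS _).1 hzS).2, hqz, h⟩
    · intro q hq a ha b hb hqa hqb hab
      by_cases hap : a = p
      · subst hap; left; rw [hyu q hq hqa, hyu b hb hab.symm]
      by_cases hbp : b = p
      · subst hbp; right; rw [hyu q hq hqb, hyu a ha hab]
      by_cases hqp : q = p
      · subst hqp
        by_cases hal : a = l
        · right; rw [hyp b hb hbp (fun h => hab (hal.trans h.symm)), hal]
        by_cases hbl : b = l
        · left; rw [hyp a ha hap hal, hbl]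
        rw [hyp a ha hap hal, hyp b hb hbp hbl]
        exact p2 l hlS' a ((hmS a).2 ⟨hap, ha⟩) b ((hmS b).2 ⟨hbp, hb⟩) (Ne.symm hal) (Ne.symm hbl)
          hab
      · exact p2 q ((hmS q).2 ⟨hqp, hq⟩) a ((hmS a).2 ⟨hap, ha⟩) b ((hmS b).2 ⟨hbp, hb⟩) hqa hqb hab
    · intro a ha b hb hab
      by_cases hbp : b = p
      · subst hbp
        refine ⟨l, hl, hlp, by rw [hyu l hl hlp, hyu a ha hab], ?_⟩
        rw [hyu l hl hlp]
        exact fun h => hlu h.symm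
      have hbS' := (hmS b).2 ⟨hbp, hb⟩
      by_cases hap : a = p
      · subst hap
        by_cases hbl : b = l
        · subst hbl
          refine ⟨a, ha, hab, rfl, ?_⟩
          rw [hyu b hb hbp]
          exact hlu
        · rw [hyp b hb hbp hbl]
          obtain ⟨c, hc, h⟩ := p3 l hlS' b hbS' (Ne.symm hbl)
          exact ⟨c, ((hmS c).1 hc).2, h⟩
      · obtain ⟨c, hc, h⟩ := p3 a ((hmS a).2 ⟨hap, ha⟩) b hbS' hab
        exact ⟨c, ((hmS c).1 hc).2, h⟩
    · have hgood : ∀ b ∈ S', b ≠ l → (∀ q ∈ S', ∀ q' ∈ S', q ≠ b → q' ≠ b → y q b = y q' b) →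
          (∀ q ∈ S, ∀ q' ∈ S, q ≠ b → q' ≠ b → y q b = y q' b) := by
        intro b hb hbl h
        have hb' := (hmS b).1 hb
        have h' : ∀ q ∈ S, q ≠ b → y q b = y l b := by
          intro q hq hqb
          by_cases hqp : q = p
          · subst hqp; exact hyp b hb'.2 hb'.1 hbl
          · exact h q ((hmS q).2 ⟨hqp, hq⟩) l hlS' hqb (Ne.symm hbl)
        intro q hq q' hq' hqb hqb'
        rw [h' q hq hqb, h' q' hq' hqb']
      have hpl : ∀ q ∈ S, ∀ q' ∈ S, q ≠ p → q' ≠ p → y q p = y q' p := by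
        intro q hq q' hq' h h'
        rw [hyu q hq h, hyu q' hq' h']
      obtain ⟨b, hb, b', hb', hbb, hg, hg'⟩ := p4
      by_cases hbl : b = l
      · have hbl' : b' ≠ l := fun h => hbb (hbl.trans h.symm)
        exact ⟨p, hp, b', ((hmS b').1 hb').2, Ne.symm ((hmS b').1 hb').1, hpl, hgood b' hb' hbl' hg'⟩
      · exact ⟨p, hp, b, ((hmS b).1 hb).2, Ne.symm ((hmS b).1 hb).1, hpl, hgood b hb hbl hg⟩
    · intro q hq f hf1 hf2 a ha haq
      by_cases hqp : q = p
      · subst hqp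
        obtain ⟨k1, k2⟩ := hkey f hf1 hf2
        by_cases hal : a = l
        · rw [hal, k1]
        · rw [k2 a ha haq hal, hyp a ha haq hal]
      · have hfp : f p = u :=
          hsing _ (hf1 p hp (Ne.symm hqp)).1 _ huH.1 (hf1 p hp (Ne.symm hqp)).2 huH.2
        by_cases hap : a = p
        · subst hap; rw [hfp, hyu q hq hqp]
        refine p5 q ((hmS q).2 ⟨hqp, hq⟩) f ?_ ?_ a ((hmS a).2 ⟨hap, ha⟩) haq
        · intro b hb hbq
          rw [hmS] at hb
          refine ⟨(hmH _).2 ⟨(hf1 b hb.2 hbq).1, ?_⟩, (hf1 b hb.2 hbq).2⟩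
          rw [← hfp]
          exact hf2 p hp b hb.2 (Ne.symm hqp) hbq (Ne.symm hb.1)
        · intro b hb c hc
          rw [hmS] at hb hc
          exact hf2 b hb.2 c hc.2

theorem core_false {ι V : Type} [Fintype ι] [DecidableEq ι] (G : SimpleGraph V)
    (hcard : 4 ≤ Fintype.card ι) (y : ι → ι → ι → V)
    (sym : ∀ i q a, i ≠ q → a ≠ i → a ≠ q → y i q a = y q i a)
    (adj : ∀ i q a b, i ≠ q → a ≠ i → a ≠ q → b ≠ i → b ≠ q → a ≠ b → G.Adj (y i q a) (y i q b))
    (p2 : ∀ i q a b, q ≠ i → a ≠ i → b ≠ i → q ≠ a → q ≠ b → a ≠ b →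
      y i q a = y i b a ∨ y i q b = y i a b)
    (p3 : ∀ i a b, a ≠ i → b ≠ i → a ≠ b →
      ∃ c, c ≠ i ∧ c ≠ b ∧ y i c b = y i a b ∧ ¬ G.Adj (y i b c) (y i c b))
    (p4 : ∀ i, ∃ b b', b ≠ i ∧ b' ≠ i ∧ b ≠ b' ∧
      (∀ q q', q ≠ i → q' ≠ i → q ≠ b → q' ≠ b → y i q b = y i q' b) ∧
      (∀ q q', q ≠ i → q' ≠ i → q ≠ b' → q' ≠ b' → y i q b' = y i q' b'))
    (half : ∀ i j a b, a ≠ b → a ≠ i → b ≠ i → a ≠ j → b ≠ j → ¬ G.Adj (y j b a) (y j a b) →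
      y i a b = y j a b → y i b a = y j b a) : False := by
  have lem : ∀ i j a b, a ≠ b → a ≠ i → b ≠ i → a ≠ j → b ≠ j → ¬ G.Adj (y j b a) (y j a b) →
      (y i a b = y j a b ↔ y i b a = y j b a) ∧
      (y i a b = y j a b → ¬ G.Adj (y i b a) (y i a b)) := by
    intro i j a b hab hai hbi haj hbj hn
    refine ⟨⟨half i j a b hab hai hbi haj hbj hn, half i j b a hab.symm hbi hai hbj haj
      (fun h => hn h.symm)⟩, fun h => ?_⟩
    rw [half i j a b hab hai hbi haj hbj hn h, h]
    exact hn
  have uniq : ∀ i b c c', b ≠ i → c ≠ i → c' ≠ i → c ≠ b → c' ≠ b →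
      ¬ G.Adj (y i b c) (y i c b) → ¬ G.Adj (y i b c') (y i c' b) → y i c b = y i c' b →
      c = c' := by
    intro i b c c' hb hc hc' hcb hcb' h h' heq
    by_contra hne
    rcases p2 i b c c' hb hc hc' hcb.symm hcb'.symm hne with e | e
    · apply h
      rw [e, heq]
      exact adj i c' c b hc'.symm hc hne hb hcb'.symm hcb
    · apply h'
      rw [e, ← heq]
      exact adj i c c' b hc.symm hc' (Ne.symm hne) hb hcb.symm hcb'
  have type1 : ∀ a b, a ≠ b → (∀ q q', q ≠ a → q' ≠ a → q ≠ b → q' ≠ b → y a q b = y a q' b) →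
      ∃ j, j ≠ a ∧ j ≠ b ∧ ¬ G.Adj (y j b a) (y j a b) := by
    intro a b hab leaf
    by_contra hR
    push Not at hR
    obtain ⟨q0, hq0⟩ : ∃ q0, q0 ∉ ({a, b} : Finset ι) := by
      by_contra hcon
      push Not at hcon
      have h1 : (Finset.univ : Finset ι) ⊆ {a, b} := fun x _ => hcon x
      have h2 := Finset.card_le_card h1
      have h3 := Finset.card_le_two (a := a) (b := b)
      rw [Finset.card_univ] at h2
      omega
    simp only [Finset.mem_insert, Finset.mem_singleton, not_or] at hq0
    obtain ⟨c, hca, hcb, -, hcn⟩ := p3 a q0 b hq0.1 hab.symm hq0.2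
    have only : ∀ d, d ≠ a → d ≠ b → ¬ G.Adj (y a b d) (y a d b) → d = c := by
      intro d hda hdb hd
      exact uniq a b d c hab.symm hda hca hdb hcb hd hcn (leaf d c hda hca hdb hcb)
    classical
    let N : ι → Finset ι := fun c' => Finset.univ.filter
      (fun q => q ≠ b ∧ q ≠ c' ∧ y b q c' = y b a c')
    have walk : ∀ n : ℕ, ∀ e, e ≠ a → e ≠ b →
        (e = c ∨ (y e c b ≠ y e a b ∧ y b c e ≠ y b a e)) → (N e).card ≤ n → False := by
      intro n
      induction n with
      | zero =>
        intro e hea heb _ hN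
        have : a ∈ N e := by simp [N, hab, hea.symm]
        have := Finset.card_pos.2 ⟨a, this⟩
        omega
      | succ n ih =>
        intro e hea heb hinv hN
        obtain ⟨d, hde, hdb, hd1, hd2⟩ := p3 e a b hea.symm heb.symm hab
        have hda : d ≠ a := by
          rintro rfl
          exact hd2 (hR e hea heb)
        have hdc : d ≠ c := by
          rintro rfl
          rcases hinv with h | h
          · exact hde h.symm
          · exact h.1 hd1
        have hL := fun i (h1 : d ≠ i) (h2 : b ≠ i) =>
          lem i e d b hdb h1 h2 hde heb.symm hd2
        have hnot : y a d b ≠ y e d b := by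
          intro h
          exact hdc (only d hda hdb ((hL a hda hab.symm).2 h))
        have hsep : y a b d ≠ y e b d := fun h => hnot ((hL a hda hab.symm).1.2 h)
        have hsep' : y b e d ≠ y b a d := by
          intro h
          apply hsep
          rw [sym a b d hab hda hdb, sym e b d heb hde hdb, h]
        have hdN : y b a e = y b d e := by
          rcases p2 b a e d hab heb hdb hea.symm hda.symm hde.symm with h | h
          · exact h
          · exact absurd h.symm hsep'
        have hsubN : ∀ q ∈ N d, q ∈ N e := by
          intro q hq
          simp only [N, Finset.mem_filter, Finset.mem_univ, true_and] at hq ⊢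
          have hqe : q ≠ e := by
            rintro rfl
            exact hsep' hq.2.2
          refine ⟨hq.1, hqe, ?_⟩
          rcases p2 b q e d hq.1 heb hdb hqe hq.2.1 hde.symm with h | h
          · rw [h, hdN]
          · exact absurd (h.symm.trans hq.2.2) hsep'
        have hlt : (N d).card < (N e).card := by
          apply Finset.card_lt_card
          refine ⟨hsubN, fun h => ?_⟩
          have : d ∈ N e := by simp [N, hdb, hde, hdN]
          have := h this
          simp [N] at this
        refine ih d hda hdb (Or.inr ?_) (by omega)
        have hbcd : y b c d = y b e d := by
          rcases hinv with rfl | h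
          · rfl
          by_cases hce : c = e
          · rw [hce]
          rcases p2 b c e d hcb heb hdb hce hdc.symm hde.symm with h' | h'
          · exact absurd (h'.trans hdN.symm) h.2
          · exact h'
        refine ⟨?_, by rw [hbcd]; exact hsep'⟩
        have h1 : y c d b = y e d b := (hL c hdc hcb.symm).1.2 (by
          rw [sym c b d hcb hdc hdb, sym e b d heb hde hdb, hbcd])
        rw [sym d c b hdc hdb.symm hcb.symm, h1, sym d a b hda hdb.symm hab.symm]
        exact hnot.symm
    exact walk _ c hca hcb (Or.inl rfl) le_rfl
  obtain ⟨a⟩ : Nonempty ι := Fintype.card_pos_iff.1 (by omega)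
  obtain ⟨b, b', hba, hba', hbb, hl, hl'⟩ := p4 a
  obtain ⟨i, hi⟩ : ∃ i, i ∉ ({a, b, b'} : Finset ι) := by
    by_contra hcon
    push Not at hcon
    have h1 : (Finset.univ : Finset ι) ⊆ {a, b, b'} := fun x _ => hcon x
    have h2 := Finset.card_le_card h1
    have h3 := Finset.card_le_three (a := a) (b := b) (c := b')
    rw [Finset.card_univ] at h2
    omega
  simp only [Finset.mem_insert, Finset.mem_singleton, not_or] at hi
  obtain ⟨hia, hib, hib'⟩ := hi
  have main : ∀ b, b ≠ a → (∀ q q', q ≠ a → q' ≠ a → q ≠ b → q' ≠ b → y a q b = y a q' b) →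
      (∀ k, k ≠ a → k ≠ b → ¬ G.Adj (y k b a) (y k a b)) ∧
      (∀ k k', k ≠ a → k ≠ b → k' ≠ a → k' ≠ b → y k b a = y k' b a) := by
    intro b hb leaf
    obtain ⟨j, hja, hjb, hj⟩ := type1 a b hb.symm leaf
    have h0 : ∀ k, k ≠ a → k ≠ b → y k a b = y j a b := by
      intro k hka hkb
      rw [sym k a b hka hkb.symm hb, sym j a b hja hjb.symm hb]
      exact leaf k j hka hja hkb hjb
    have hL := fun k (h1 : k ≠ a) (h2 : k ≠ b) =>
      lem k j a b hb.symm h1.symm h2.symm hja.symm hjb.symm hj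
    have h1 : ∀ k, k ≠ a → k ≠ b → y k b a = y j b a := fun k hka hkb =>
      (hL k hka hkb).1.1 (h0 k hka hkb)
    exact ⟨fun k hka hkb => (hL k hka hkb).2 (h0 k hka hkb),
      fun k k' a1 a2 a3 a4 => by rw [h1 k a1 a2, h1 k' a3 a4]⟩
  obtain ⟨m1, m2⟩ := main b hba hl
  obtain ⟨m1', m2'⟩ := main b' hba' hl'
  apply hbb
  refine uniq i a b b' (Ne.symm hia) (Ne.symm hib) (Ne.symm hib') hba hba' ?_ ?_ ?_
  · exact fun h => m1 i hia hib h.symm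
  · exact fun h => m1' i hia hib' h.symm
  · rw [m2 i b' hia hib hba' hbb.symm, sym b' b a hbb.symm hba'.symm hba.symm]
    exact m2' b i hba hbb hia hib'

theorem transversal_of_clique {V : Type} {r : ℕ} (G : SimpleGraph V) (P : V → Fin r)
    (hP : ∀ u v, G.Adj u v → P u ≠ P v) (T : Finset V) (hT : G.IsNClique r T) :
    ∃ f : Fin r → V, (∀ a, P (f a) = a) ∧ (∀ a, f a ∈ T) ∧ (∀ v ∈ T, f (P v) = v) ∧
      ∀ a b, a ≠ b → G.Adj (f a) (f b) := by
  classical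
  have hinj : Set.InjOn P T := by
    intro u hu v hv h
    by_contra hne
    exact hP u v (hT.isClique hu hv hne) h
  have himg : T.image P = Finset.univ := by
    apply Finset.eq_univ_of_card
    rw [Finset.card_image_of_injOn hinj, hT.card_eq, Fintype.card_fin]
  have hex : ∀ a, ∃ v ∈ T, P v = a := by
    intro a
    have : a ∈ T.image P := by rw [himg]; simp
    simpa using this
  choose f hfT hfP using hex
  refine ⟨f, hfP, hfT, fun v hv => hinj (hfT _) hv (hfP _), ?_⟩
  intro a b hab
  apply hT.isClique (hfT a) (hfT b)
  intro h
  exact hab (by rw [← hfP a, h, hfP b])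

theorem not_cliqueFree_of_transversal {V : Type} {r : ℕ} (G : SimpleGraph V) (f : Fin r → V)
    (hf : ∀ a b, a ≠ b → G.Adj (f a) (f b)) : ¬ G.CliqueFree r := by
  classical
  intro h
  have hinj : Function.Injective f := by
    intro a b hab
    by_contra hne
    have := hf a b hne
    rw [hab] at this
    exact G.loopless.irrefl _ this
  refine h (Finset.univ.image f) ⟨?_, ?_⟩
  · intro u hu v hv huv
    simp only [Finset.coe_image, Finset.coe_univ, Set.image_univ, Set.mem_range] at hu hv
    obtain ⟨a, rfl⟩ := hu
    obtain ⟨b, rfl⟩ := hv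
    exact hf a b (fun h => huv (by rw [h]))
  · rw [Finset.card_image_of_injective _ hinj, Finset.card_univ, Fintype.card_fin]

/-- Using saturation of a non-adjacent pair. -/
theorem sat_transversal {V : Type} {r : ℕ} (G : SimpleGraph V) (P : V → Fin r)
    (hs : PartiteSaturated r r G P) (u v : V) (huv : P u ≠ P v) (hn : ¬ G.Adj u v) :
    ∃ f : Fin r → V, (∀ a, P (f a) = a) ∧ f (P u) = u ∧ f (P v) = v ∧
      ∀ a b, a ≠ b → ¬ (a = P u ∧ b = P v) → ¬ (a = P v ∧ b = P u) → G.Adj (f a) (f b) := by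
  obtain ⟨h1, h2, h3⟩ := hs
  have h4 := h3 u v huv hn
  rw [SimpleGraph.CliqueFree] at h4
  push Not at h4
  obtain ⟨T, hT⟩ := h4
  have hadj : ∀ a b, (G ⊔ SimpleGraph.fromEdgeSet {s(u, v)}).Adj a b →
      G.Adj a b ∨ (a = u ∧ b = v) ∨ (a = v ∧ b = u) := by
    intro a b h
    simp only [SimpleGraph.sup_adj, SimpleGraph.fromEdgeSet_adj, Set.mem_singleton_iff,
      Sym2.eq_iff] at h
    tauto
  obtain ⟨f, f1, f2, f3, f4⟩ := transversal_of_clique _ P (by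
    intro a b h
    rcases hadj a b h with h | ⟨rfl, rfl⟩ | ⟨rfl, rfl⟩
    exacts [h1 a b h, huv, huv.symm]) T hT
  have hboth : f (P u) = u ∧ f (P v) = v := by
    by_contra hcon
    refine not_cliqueFree_of_transversal G f ?_ h2
    intro a b hab
    rcases hadj _ _ (f4 a b hab) with h | ⟨ha, hb⟩ | ⟨ha, hb⟩
    · exact h
    · exact absurd ⟨by rw [← ha, f1], by rw [← hb, f1]⟩ hcon
    · exact absurd ⟨by rw [← hb, f1], by rw [← ha, f1]⟩ hcon
  refine ⟨f, f1, hboth.1, hboth.2, ?_⟩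
  intro a b hab c1 c2
  rcases hadj _ _ (f4 a b hab) with h | ⟨ha, hb⟩ | ⟨ha, hb⟩
  · exact h
  · exact absurd ⟨by rw [← ha, f1], by rw [← hb, f1]⟩ c1
  · exact absurd ⟨by rw [← ha, f1], by rw [← hb, f1]⟩ c2

theorem lower (r : ℕ) (hr : 4 ≤ r) (m : ℕ) (hm : AlphaWitness r r m) :
    r * (2 * r - 4) + 1 ≤ m := by
  classical
  obtain ⟨n, G, P, x, hs, hx, hind, rfl⟩ := hm
  by_contra hlt
  push Not at hlt
  let H : Fin r → Finset (Fin n) := fun i => Finset.univ.filter (fun z => G.Adj (x i) z)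
  have hmH : ∀ i z, z ∈ H i ↔ G.Adj (x i) z := by intro i z; simp [H]
  have hHc : ∀ i, (G.neighborSet (x i)).ncard = (H i).card := by
    intro i
    rw [← Set.ncard_coe_finset]
    congr 1
    ext z; simp [H]
  have hexf : ∀ i j, i ≠ j → ∃ f : Fin r → Fin n, (∀ a, P (f a) = a) ∧ f i = x i ∧ f j = x j ∧
      ∀ a b, a ≠ b → ¬ (a = i ∧ b = j) → ¬ (a = j ∧ b = i) → G.Adj (f a) (f b) := by
    intro i j hij
    have := sat_transversal G P hs (x i) (x j) (by rw [hx, hx]; exact hij) (hind i j)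
    simpa only [hx] using this
  have hexf' : ∀ i j, ∃ f : Fin r → Fin n, i ≠ j → (∀ a, P (f a) = a) ∧ f i = x i ∧ f j = x j ∧
      ∀ a b, a ≠ b → ¬ (a = i ∧ b = j) → ¬ (a = j ∧ b = i) → G.Adj (f a) (f b) := by
    intro i j
    by_cases hij : i = j
    · exact ⟨x, fun h => absurd hij h⟩
    · obtain ⟨f, hf⟩ := hexf i j hij
      exact ⟨f, fun _ => hf⟩
  choose y hy using hexf'
  have yP : ∀ i q a, i ≠ q → P (y i q a) = a := fun i q a h => (hy i q h).1 a
  have yH : ∀ i q a, i ≠ q → a ≠ i → a ≠ q → y i q a ∈ H i := by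
    intro i q a h hai haq
    have := (hy i q h).2.2.2 i a hai.symm (fun h => haq h.2) (fun h' => h h'.1)
    rw [(hy i q h).2.1] at this
    exact (hmH _ _).2 this
  have yH' : ∀ i q a, i ≠ q → a ≠ i → a ≠ q → y i q a ∈ H q := by
    intro i q a h hai haq
    have := (hy i q h).2.2.2 q a haq.symm (fun h' => h h'.1.symm) (fun h' => hai h'.2)
    rw [(hy i q h).2.2.1] at this
    exact (hmH _ _).2 this
  have yadj : ∀ i q a b, i ≠ q → a ≠ i → a ≠ q → b ≠ i → b ≠ q → a ≠ b →
      G.Adj (y i q a) (y i q b) := fun i q a b h h1 h2 h3 h4 h5 =>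
    (hy i q h).2.2.2 a b h5 (fun h => h1 h.1) (fun h => h2 h.1)
  have hstr : ∀ i, 2 * (r - 3 + 1) ≤ (H i).card ∧ ((H i).card = 2 * (r - 3 + 1) →
      TreeLike G P (Finset.univ.erase i) (H i) (y i)) := by
    intro i
    apply tree_struct G P (r - 3) (Finset.univ.erase i) (H i) (y i)
    · rw [Finset.card_erase_of_mem (Finset.mem_univ i), Finset.card_univ, Fintype.card_fin]
      omega
    · intro q hq a ha hqa
      simp only [Finset.mem_erase, Finset.mem_univ, and_true] at hq ha
      exact ⟨yH i q a (Ne.symm hq) ha (Ne.symm hqa), yP i q a (Ne.symm hq)⟩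
    · intro q hq a ha b hb hqa hqb hab
      simp only [Finset.mem_erase, Finset.mem_univ, and_true] at hq ha hb
      exact yadj i q a b (Ne.symm hq) ha (Ne.symm hqa) hb (Ne.symm hqb) hab
    · rintro ⟨f, hf⟩
      simp only [Finset.mem_erase, Finset.mem_univ, and_true] at hf
      refine not_cliqueFree_of_transversal G (fun a => if a = i then x i else f a) ?_ hs.2.1
      intro a b hab
      by_cases hai : a = i
      · have hbi : b ≠ i := fun h => hab (hai.trans h.symm)
        simpa [hai, hbi] using (hmH _ _).1 (hf b hbi).1.1
      by_cases hbi : b = i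
      · simpa [hai, hbi] using ((hmH _ _).1 (hf a hai).1.1).symm
      · simpa [hai, hbi] using (hf a hai).2 b hbi hab
  have heq : ∀ i, (H i).card = 2 * (r - 3 + 1) := by
    intro i
    by_contra hne
    have h1 : ∑ j : Fin r, 2 * (r - 3 + 1) < ∑ j : Fin r, (H j).card :=
      Finset.sum_lt_sum (fun j _ => (hstr j).1)
        ⟨i, Finset.mem_univ i, lt_of_le_of_ne (hstr i).1 (Ne.symm hne)⟩
    simp only [hHc] at hlt
    simp only [Finset.sum_const, Finset.card_univ, Fintype.card_fin, smul_eq_mul] at h1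
    have : 2 * (r - 3 + 1) = 2 * r - 4 := by omega
    rw [this] at h1
    omega
  have T := fun i => (hstr i).2 (heq i)
  have hme : ∀ i j : Fin r, j ∈ Finset.univ.erase i ↔ j ≠ i := by intro i j; simp
  have ysym : ∀ i q a, i ≠ q → a ≠ i → a ≠ q → y i q a = y q i a := by
    intro i q a hiq hai haq
    refine ((T i).p5 q ((hme _ _).2 hiq.symm) (y q i) ?_ ?_ a ((hme _ _).2 hai) haq).symm
    · intro b hb hbq
      rw [hme] at hb
      exact ⟨yH' q i b hiq.symm hbq hb, yP q i b hiq.symm⟩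
    · intro b hb c hc hbq hcq hbc
      rw [hme] at hb hc
      exact yadj q i b c hiq.symm hbq hb hcq hc hbc
  have ysat : ∀ i v, P v ≠ i → v ∉ H i → ∀ c, c ≠ i → c ≠ P v → G.Adj v (y i (P v) c) := by
    intro i v hvi hv c hci hcv
    rw [hmH] at hv
    obtain ⟨f, f1, f2, f3, f4⟩ := sat_transversal G P hs (x i) v (by rw [hx]; exact hvi.symm) hv
    rw [hx] at f2 f4
    have : f c = y i (P v) c := by
      refine (T i).p5 (P v) ((hme _ _).2 hvi) f ?_ ?_ c ((hme _ _).2 hci) hcv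
      · intro b hb hbv
        rw [hme] at hb
        refine ⟨(hmH _ _).2 ?_, f1 b⟩
        rw [← f2]
        exact f4 i b hb.symm (fun h => hbv h.2) (fun h => hvi h.1.symm)
      · intro b hb d hd hbv hdv hbd
        rw [hme] at hb hd
        exact f4 b d hbd (fun h => hb h.1) (fun h => hbv h.1)
    rw [← this]
    have := f4 (P v) c hcv.symm (fun h => hvi h.1) (fun h => hci h.2)
    rwa [f3] at this
  refine core_false G (by simpa using hr) y ysym yadj ?_ ?_ ?_ ?_
  · intro i q a b hq ha hb
    exact (T i).p2 q ((hme _ _).2 hq) a ((hme _ _).2 ha) b ((hme _ _).2 hb)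
  · intro i a b ha hb hab
    obtain ⟨c, hc, h⟩ := (T i).p3 a ((hme _ _).2 ha) b ((hme _ _).2 hb) hab
    exact ⟨c, (hme _ _).1 hc, h⟩
  · intro i
    obtain ⟨b, hb, b', hb', hbb, h, h'⟩ := (T i).p4
    exact ⟨b, b', (hme _ _).1 hb, (hme _ _).1 hb', hbb,
      fun q q' hq hq' => h q ((hme _ _).2 hq) q' ((hme _ _).2 hq'),
      fun q q' hq hq' => h' q ((hme _ _).2 hq) q' ((hme _ _).2 hq')⟩
  · intro i j a b hab hai hbi haj hbj hn he
    have hPv : P (y j b a) = a := yP j b a hbj.symm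
    have hmem : y j b a ∈ H i := by
      by_contra hcon
      have := ysat i (y j b a) (by rw [hPv]; exact hai) hcon b hbi (by rw [hPv]; exact hab.symm)
      rw [hPv, he] at this
      exact hn this
    obtain ⟨q, hq, -, hqa, hqe⟩ := (T i).p0 _ hmem
    rw [hPv] at hqa hqe
    rw [hme] at hq
    by_cases hqb : q = b
    · rw [hqe, hqb]
    rcases (T i).p2 q ((hme _ _).2 hq) a ((hme _ _).2 hai) b ((hme _ _).2 hbi) hqa hqb hab with h | h
    · rw [hqe, h]
    · exfalso
      apply hn
      rw [hqe, ← he, ← h]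
      exact yadj i q a b hq.symm hai hqa.symm hbi (Ne.symm hqb) hab

/-- The starting graph of the construction: independent `x_i` together with, for every pair,
a clique on the remaining parts joined to that pair. -/
def startGraph (r : ℕ) : SimpleGraph (Fin r ⊕ ((Fin r × Fin r) × Fin r)) where
  Adj
    | Sum.inl _, Sum.inl _ => False
    | Sum.inl i, Sum.inr t => t.1.1 ≠ t.1.2 ∧ t.2 ≠ t.1.1 ∧ t.2 ≠ t.1.2 ∧ (i = t.1.1 ∨ i = t.1.2)
    | Sum.inr t, Sum.inl i => t.1.1 ≠ t.1.2 ∧ t.2 ≠ t.1.1 ∧ t.2 ≠ t.1.2 ∧ (i = t.1.1 ∨ i = t.1.2)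
    | Sum.inr t, Sum.inr t' => t.1 = t'.1 ∧ t.1.1 ≠ t.1.2 ∧ t.2 ≠ t.1.1 ∧ t.2 ≠ t.1.2 ∧
        t'.2 ≠ t.1.1 ∧ t'.2 ≠ t.1.2 ∧ t.2 ≠ t'.2
  symm := ⟨by
    rintro (i | t) (j | t') h
    · exact h
    · exact h
    · exact h
    · obtain ⟨h1, h2, h3, h4, h5, h6, h7⟩ := h
      rw [h1] at h2 h3 h4 h5 h6
      exact ⟨h1.symm, h2, h5, h6, h3, h4, h7.symm⟩⟩
  loopless := ⟨by
    rintro (i | t) h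
    · exact h
    · exact h.2.2.2.2.2.2 rfl⟩

def startPart (r : ℕ) : Fin r ⊕ ((Fin r × Fin r) × Fin r) → Fin r
  | Sum.inl i => i
  | Sum.inr t => t.2

theorem startGraph_partite (r : ℕ) : ∀ u v, (startGraph r).Adj u v →
    startPart r u ≠ startPart r v := by
  rintro (i | t) (j | t') h
  · exact h.elim
  · obtain ⟨h1, h2, h3, rfl | rfl⟩ := h
    exacts [h2.symm, h3.symm]
  · obtain ⟨h1, h2, h3, rfl | rfl⟩ := h
    exacts [h2, h3]
  · exact h.2.2.2.2.2.2

theorem startGraph_cliqueFree (r : ℕ) (hr : 4 ≤ r) : (startGraph r).CliqueFree r := by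
  intro T hT
  obtain ⟨f, f1, -, -, f4⟩ := transversal_of_clique _ _ (startGraph_partite r) T hT
  have hinl : ∀ a i, f a = Sum.inl i → i = a := by
    intro a i h
    have := f1 a
    rw [h] at this
    exact this
  have hinr : ∀ a t, f a = Sum.inr t → t.2 = a := by
    intro a t h
    have := f1 a
    rw [h] at this
    exact this
  have key : ∀ a t, f a ≠ Sum.inr t := by
    intro a t hat
    have ha := hinr a t hat
    obtain ⟨b, hb⟩ : ∃ b : Fin r, b ≠ a := by
      have : Nontrivial (Fin r) := Fin.nontrivial_iff_two_le.2 (by omega)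
      exact exists_ne a
    have hval : t.1.1 ≠ t.1.2 ∧ t.2 ≠ t.1.1 ∧ t.2 ≠ t.1.2 := by
      have h := f4 a b hb.symm
      rw [hat] at h
      rcases hfb : f b with i | t'
      · rw [hfb] at h; exact ⟨h.1, h.2.1, h.2.2.1⟩
      · rw [hfb] at h; exact ⟨h.2.1, h.2.2.1, h.2.2.2.1⟩
    have hp : ∀ c, (c = t.1.1 ∨ c = t.1.2) → f c = Sum.inl c := by
      intro c hc
      have hac : a ≠ c := by
        rcases hc with rfl | rfl
        · rw [← ha]; exact hval.2.1
        · rw [← ha]; exact hval.2.2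
      rcases hfc : f c with i | t'
      · rw [hinl c i hfc]
      · exfalso
        have h := f4 a c hac
        rw [hat, hfc] at h
        have h2 := hinr c t' hfc
        rcases hc with rfl | rfl
        · exact h.2.2.2.2.1 h2
        · exact h.2.2.2.2.2.1 h2
    have h := f4 _ _ hval.1
    rw [hp _ (Or.inl rfl), hp _ (Or.inr rfl)] at h
    exact h
  have h := f4 ⟨0, by omega⟩ ⟨1, by omega⟩ (by simp)
  rcases h0 : f ⟨0, by omega⟩ with i | t
  · rcases h1 : f ⟨1, by omega⟩ with j | t'
    · rw [h0, h1] at h; exact h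
    · exact key _ _ h1
  · exact key _ _ h0

theorem startGraph_pair (r : ℕ) (i j : Fin r) (hij : i ≠ j) :
    ∃ f : Fin r → Fin r ⊕ ((Fin r × Fin r) × Fin r), f i = Sum.inl i ∧ f j = Sum.inl j ∧
      ∀ a b, a ≠ b → ¬ (a = i ∧ b = j) → ¬ (a = j ∧ b = i) → (startGraph r).Adj (f a) (f b) := by
  refine ⟨fun a => if a = i ∨ a = j then Sum.inl a else Sum.inr ((i, j), a), by simp, by simp, ?_⟩
  intro a b hab h1 h2
  by_cases ha : a = i ∨ a = j
  · by_cases hb : b = i ∨ b = j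
    · exfalso
      rcases ha with rfl | rfl <;> rcases hb with rfl | rfl <;> simp_all
    · simp only [ha, hb, if_true, if_false]
      push Not at hb
      exact ⟨hij, hb.1, hb.2, ha⟩
  · by_cases hb : b = i ∨ b = j
    · simp only [ha, hb, if_true, if_false]
      push Not at ha
      exact ⟨hij, ha.1, ha.2, hb⟩
    · simp only [ha, hb, if_false]
      push Not at ha hb
      exact ⟨rfl, hij, ha.1, ha.2, hb.1, hb.2, hab⟩

theorem witness_exists (r : ℕ) (hr : 4 ≤ r) : ∃ m, AlphaWitness r r m := by
  classical
  let W := Fin r ⊕ ((Fin r × Fin r) × Fin r)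
  let e : Fin (Fintype.card W) ≃ W := (Fintype.equivFin W).symm
  let G0 : SimpleGraph (Fin (Fintype.card W)) := (startGraph r).comap e
  let P : Fin (Fintype.card W) → Fin r := fun v => startPart r (e v)
  let x : Fin r → Fin (Fintype.card W) := fun i => e.symm (Sum.inl i)
  let A : Set (SimpleGraph (Fin (Fintype.card W))) :=
    {G | (∀ u v, G.Adj u v → P u ≠ P v) ∧ G.CliqueFree r}
  have hA0 : G0 ∈ A := by
    refine ⟨fun u v h => startGraph_partite r _ _ h, ?_⟩
    exact SimpleGraph.CliqueFree.comap ⟨(SimpleGraph.Embedding.comap e.toEmbedding (startGraph r)).toCopy⟩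
      (startGraph_cliqueFree r hr)
  obtain ⟨G, hG0, hG⟩ := (Set.toFinite A).exists_le_maximal hA0
  have hPx : ∀ i, P (x i) = i := by intro i; simp [P, x, startPart]
  refine ⟨_, Fintype.card W, G, P, x, ⟨hG.prop.1, hG.prop.2, ?_⟩, hPx, ?_, rfl⟩
  · intro u v huv hn hcf
    have hle : G ⊔ SimpleGraph.fromEdgeSet {s(u, v)} ≤ G := by
      apply hG.le_of_ge _ le_sup_left
      refine ⟨?_, hcf⟩
      intro a b h
      simp only [SimpleGraph.sup_adj, SimpleGraph.fromEdgeSet_adj, Set.mem_singleton_iff,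
        Sym2.eq_iff] at h
      rcases h with h | ⟨⟨rfl, rfl⟩ | ⟨rfl, rfl⟩, _⟩
      exacts [hG.prop.1 a b h, huv, huv.symm]
    apply hn
    apply hle
    have : u ≠ v := fun h => huv (by rw [h])
    simp [this]
  · intro i j hadj
    have hij : i ≠ j := by
      rintro rfl
      exact G.loopless.irrefl _ hadj
    obtain ⟨f, f1, f2, f3⟩ := startGraph_pair r i j hij
    refine not_cliqueFree_of_transversal G (fun a => e.symm (f a)) ?_ hG.prop.2
    intro a b hab
    by_cases h1 : a = i ∧ b = j
    · obtain ⟨rfl, rfl⟩ := h1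
      simp only [f1, f2]
      exact hadj
    by_cases h2 : a = j ∧ b = i
    · obtain ⟨rfl, rfl⟩ := h2
      simp only [f1, f2]
      exact hadj.symm
    apply hG0
    have := f3 a b hab h1 h2
    simpa [G0] using this

theorem stmt_18 (r : ℕ) (hr : 4 ≤ r) : r * (2 * r - 4) + 1 ≤ alpha r r :=
  lower r hr _ (Nat.sInf_mem (s := {m | AlphaWitness r r m}) (witness_exists r hr))
end
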